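/- Let a, b be positive integers and n = a + b. For every balanced binary word u with Parikh vector (a,b) and every k with 1 < k < n, the prefix of length k of u has the same Parikh vector as the prefix of length k of w_{a,b} or as the prefix of length k of W_{a,b}; equivalently, the number of 1s in the prefix of length k of u is either ⌊kb/n⌋ or ⌈kb/n⌉. -/

import Mathlib

/-- The lower Christoffel word `w_{a,b}`: the binary word of length `a+b` whose
`k`-th letter (1-based) is `⌊kb/(a+b)⌋ - ⌊(k-1)b/(a+b)⌋` (with `false = 0`, `true = 1`). -/
def lowerChristoffel (a b : ℕ) : List Bool :=
  (List.range (a + b)).map fun i => decide ((i + 1) * b / (a + b) ≠ i * b / (a + b))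

/-- The upper Christoffel word `W_{a,b}`: the binary word of length `a+b` whose
`k`-th letter is `⌈kb/(a+b)⌉ - ⌈(k-1)b/(a+b)⌉`. -/
def upperChristoffel (a b : ℕ) : List Bool :=
  (List.range (a + b)).map fun i =>
    decide (((i + 1) * b + (a + b) - 1) / (a + b) ≠ (i * b + (a + b) - 1) / (a + b))

/-- `p` is a period of `w`: `p` is positive and `w_i = w_{i+p}` for all valid indices. -/
def HasPeriod (w : List Bool) (p : ℕ) : Prop :=
  0 < p ∧ ∀ i, i + p < w.length → w.getD i false = w.getD (i + p) false

/-- A central word: a binary word with two coprime periods `p`, `q` and length `p + q - 2`. -/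
def IsCentral (w : List Bool) : Prop :=
  ∃ p q : ℕ, Nat.Coprime p q ∧ HasPeriod w p ∧ HasPeriod w q ∧ w.length + 2 = p + q

/-- A binary word is balanced if any two factors of the same length have numbers of `1`s
differing by at most `1`. -/
def BalancedWord (w : List Bool) : Prop :=
  ∀ u v : List Bool, u <:+: w → v <:+: w → u.length = v.length →
    |(u.count true : ℤ) - (v.count true : ℤ)| ≤ 1

/-- `w^m`: the `m`-th power of the word `w`. -/
def wpow (w : List Bool) (m : ℕ) : List Bool := (List.replicate m w).flatten

/-- A word is primitive if it is not a proper power. -/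
def IsPrimitiveWord (w : List Bool) : Prop := ¬ ∃ (v : List Bool) (m : ℕ), 2 ≤ m ∧ w = wpow v m

/-- A Lyndon word: a nonempty primitive word lexicographically strictly smaller than all
of its proper nonempty suffixes (for the order `0 < 1`, i.e. `false < true`). -/
def IsLyndonWord (w : List Bool) : Prop :=
  w ≠ [] ∧ IsPrimitiveWord w ∧
    ∀ u v : List Bool, w = u ++ v → u ≠ [] → v ≠ [] → List.Lex (· < ·) w v

/-- `p` is the minimal period of `w`. -/
def IsMinPeriod (w : List Bool) (p : ℕ) : Prop :=
  HasPeriod w p ∧ ∀ q : ℕ, HasPeriod w q → p ≤ q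

/-- `u` is a factor of the infinite periodic word `w^ω`. -/
def IsOmegaFactor (u w : List Bool) : Prop := ∃ m : ℕ, u <:+: wpow w m

/-- A primitive Christoffel word: a lower or upper Christoffel word `w_{a,b}` with
`gcd(a,b) = 1`. -/
def IsPrimitiveChristoffel (c : List Bool) : Prop :=
  ∃ a b : ℕ, Nat.Coprime a b ∧ (c = lowerChristoffel a b ∨ c = upperChristoffel a b)

/-!
Let `P i` be the number of `1`s in the prefix of length `i` of a balanced word of length `n`, and
let `D i = n * P i - i * P n`, so that `D 0 = D n = 0`. If `n ≤ D k`, then by balance `D` does not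
decrease over any factor of length `k`; comparing with the suffix of length `n - k`, over which `D`
changes by `-D k ≤ -n`, it does not increase over any factor of length `n - k`. Hence `D` is
nondecreasing along the rotation `i ↦ i + k` of `ℤ/n`. The orbit of `0` passes through `k` and
returns to `0`, so `n ≤ D k ≤ D 0 = 0`, a contradiction. The same argument for `-P` gives
`|D k| < n`, which says that `P k` is the floor or the ceiling of `k * P n / n`.
-/

theorem apply_le_apply_zero_of_le_rotation {α : Type*} [Preorder α] {f : ℕ → α} {n k : ℕ}
    (hk : k < n) (forward : ∀ i, i + k < n → f i ≤ f (i + k))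
    (backward : ∀ i < k, f (i + (n - k)) ≤ f i) : f k ≤ f 0 := by
  have step (i : ℕ) (hi : i < n) : f i ≤ f ((i + k) % n) := by
    rcases lt_or_ge (i + k) n with h | h
    · rw [Nat.mod_eq_of_lt h]
      exact forward i h
    · rw [Nat.mod_eq_sub_mod h, Nat.mod_eq_of_lt (by lia)]
      simpa only [show i + k - n + (n - k) = i by lia] using backward (i + k - n) (by lia)
  have orbit_mono : Monotone fun j ↦ f (j * k % n) := monotone_nat_of_le_succ fun j ↦ by
    simpa only [Nat.mod_add_mod, Nat.succ_mul] using step (j * k % n) (Nat.mod_lt _ (by lia))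
  simpa only [one_mul, Nat.mod_eq_of_lt hk, Nat.mul_mod_right] using
    orbit_mono (show 1 ≤ n by lia)

theorem mul_sub_lt_of_forall_sub_le_sub_add_one {R : Type*} [CommRing R] [LinearOrder R]
    [IsStrictOrderedRing R] {P : ℕ → R} {n k : ℕ} (hk : k < n)
    (hP : ∀ i j l, i + l ≤ n → j + l ≤ n → P (i + l) - P i ≤ P (j + l) - P j + 1) :
    n * (P k - P 0) < k * (P n - P 0) + n := by
  by_contra! hlarge
  have hn : (0 : R) < n := by exact_mod_cast (show 0 < n by lia)
  have hD : n * P k - k * (P n - P 0) ≤ n * P 0 - (0 : ℕ) * (P n - P 0) := by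
    refine apply_le_apply_zero_of_le_rotation (f := fun i ↦ n * P i - i * (P n - P 0)) hk
      (fun i hi ↦ ?_) (fun i hi ↦ ?_)
    · have hbal : P k - P 0 ≤ P (i + k) - P i + 1 := by
        simpa only [zero_add] using hP 0 i k (by lia) (by lia)
      have hscaled := mul_le_mul_of_nonneg_left hbal hn.le
      push_cast
      linarith
    · have hbal : P (i + (n - k)) - P i ≤ P n - P k + 1 := by
        simpa only [Nat.add_sub_cancel' hk.le] using hP i k (n - k) (by lia) (by lia)
      have hscaled := mul_le_mul_of_nonneg_left hbal hn.le
      push_cast [Nat.cast_sub hk.le]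
      linarith
  push_cast at hD
  linarith

theorem eq_div_or_eq_ceilDiv_of_abs_lt {n m c : ℕ} (h : |(n * c - m : ℤ)| < n) :
    c = m / n ∨ c = m ⌈/⌉ n := by
  obtain ⟨hlower, hupper⟩ := abs_lt.mp h
  have hn : 0 < n := by lia
  rcases le_or_gt (n * c) m with hle | hgt
  · left
    refine (Nat.div_eq_of_lt_le ?_ ?_).symm <;> lia
  · right
    rw [Nat.ceilDiv_eq_add_pred_div]
    refine (Nat.div_eq_of_lt_le ?_ ?_).symm <;> lia

namespace BalancedWord

variable {w : List Bool}

theorem abs_count_take_sub_le_one (hw : BalancedWord w) {i j l : ℕ} (hi : i + l ≤ w.length)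
    (hj : j + l ≤ w.length) :
    |(((w.take (i + l)).count true - (w.take i).count true) -
      ((w.take (j + l)).count true - (w.take j).count true) : ℤ)| ≤ 1 := by
  have factor (i : ℕ) : (w.drop i).take l <:+: w :=
    (List.take_prefix _ _).isInfix.trans (List.drop_suffix _ _).isInfix
  have hlength : ((w.drop i).take l).length = ((w.drop j).take l).length := by
    simp only [List.length_take, List.length_drop]
    lia
  simpa only [List.take_add, List.count_append, Nat.cast_add, add_sub_cancel_left] using
    hw _ _ (factor i) (factor j) hlength

theorem abs_mul_count_take_sub_lt (hw : BalancedWord w) {k : ℕ} (hk : k < w.length) :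
    |(w.length * (w.take k).count true - k * w.count true : ℤ)| < w.length := by
  have upper := mul_sub_lt_of_forall_sub_le_sub_add_one
    (P := fun i ↦ ((w.take i).count true : ℤ)) hk fun i j l hi hj ↦ by
      linarith [(abs_le.mp (hw.abs_count_take_sub_le_one hi hj)).2]
  have lower := mul_sub_lt_of_forall_sub_le_sub_add_one
    (P := fun i ↦ -((w.take i).count true : ℤ)) hk fun i j l hi hj ↦ by
      linarith [(abs_le.mp (hw.abs_count_take_sub_le_one hi hj)).1]
  simp only [List.take_zero, List.count_nil, List.take_length, Nat.cast_zero, neg_zero,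
    sub_zero] at upper lower
  rw [abs_lt]
  constructor <;> linarith

theorem count_take_eq_div_or_eq_ceilDiv (hw : BalancedWord w) {k : ℕ} (hk : k < w.length) :
    (w.take k).count true = k * w.count true / w.length ∨
      (w.take k).count true = (k * w.count true) ⌈/⌉ w.length :=
  eq_div_or_eq_ceilDiv_of_abs_lt (by exact_mod_cast hw.abs_mul_count_take_sub_lt hk)

end BalancedWord

theorem count_true_map_range_ne {f : ℕ → ℕ} (hf : Monotone f) (hstep : ∀ i, f (i + 1) ≤ f i + 1)
    (k : ℕ) : f 0 + ((List.range k).map fun i ↦ decide (f (i + 1) ≠ f i)).count true = f k := by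
  induction k with
  | zero => simp
  | succ k ih =>
    have hle : f k ≤ f (k + 1) := hf k.le_succ
    have hstep_k := hstep k
    rw [List.range_succ, List.map_append, List.count_append, ← add_assoc, ih]
    by_cases h : f (k + 1) = f k
    · simp [h]
    · have hsucc : f (k + 1) = f k + 1 := by lia
      simp [hsucc]

theorem count_true_map_range_mul_add_div {b c n : ℕ} (hb : b ≤ n) (hc : c < n) (k : ℕ) :
    ((List.range k).map fun i ↦ decide (((i + 1) * b + c) / n ≠ (i * b + c) / n)).count true =
      (k * b + c) / n := by
  have hmono : Monotone fun i ↦ (i * b + c) / n := fun i j hij ↦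
    Nat.div_le_div_right (by gcongr)
  have hstep (i : ℕ) : ((i + 1) * b + c) / n ≤ (i * b + c) / n + 1 := by
    rw [← Nat.add_div_right _ (by lia)]
    exact Nat.div_le_div_right (by lia)
  simpa only [zero_mul, zero_add, Nat.div_eq_of_lt hc] using count_true_map_range_ne hmono hstep k

theorem length_lowerChristoffel (a b : ℕ) : (lowerChristoffel a b).length = a + b := by
  simp [lowerChristoffel]

theorem length_upperChristoffel (a b : ℕ) : (upperChristoffel a b).length = a + b := by
  simp [upperChristoffel]

theorem count_true_take_lowerChristoffel {a b k : ℕ} (hk : k < a + b) :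
    ((lowerChristoffel a b).take k).count true = k * b / (a + b) := by
  rw [lowerChristoffel, ← List.map_take, List.take_range, min_eq_left hk.le]
  exact count_true_map_range_mul_add_div (c := 0) (by lia) (by lia) k

theorem count_true_take_upperChristoffel {a b k : ℕ} (hk : k < a + b) :
    ((upperChristoffel a b).take k).count true = (k * b) ⌈/⌉ (a + b) := by
  have hn : 1 ≤ a + b := by lia
  rw [upperChristoffel, ← List.map_take, List.take_range, min_eq_left hk.le,
    Nat.ceilDiv_eq_add_pred_div]
  simp only [Nat.add_sub_assoc hn]
  exact count_true_map_range_mul_add_div (by lia) (by lia) k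

theorem count_false_eq_of_count_true_eq {u v : List Bool} (hlen : u.length = v.length)
    (h : u.count true = v.count true) : u.count false = v.count false := by
  rwa [← List.count_false_add_count_true, ← List.count_false_add_count_true, h,
    Nat.add_right_cancel_iff] at hlen

/-- For every balanced word `u` with Parikh vector `(a,b)` (`a, b > 0`) and
every `1 < k < a + b`, the prefix of length `k` of `u` has the same Parikh vector as the
prefix of length `k` of `w_{a,b}` or of `W_{a,b}`. -/
theorem stmt7 (a b : ℕ) (ha : 0 < a) (hb : 0 < b) (u : List Bool)
    (hu : BalancedWord u) (h0 : u.count false = a) (h1 : u.count true = b)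
    (k : ℕ) (hk1 : 1 < k) (hk2 : k < a + b) :
    ((u.take k).count false = ((lowerChristoffel a b).take k).count false ∧
      (u.take k).count true = ((lowerChristoffel a b).take k).count true) ∨
    ((u.take k).count false = ((upperChristoffel a b).take k).count false ∧
      (u.take k).count true = ((upperChristoffel a b).take k).count true) := by
  have hlen : u.length = a + b := by rw [← List.count_false_add_count_true, h0, h1]
  have hcount := hu.count_take_eq_div_or_eq_ceilDiv (hlen ▸ hk2)
  rw [hlen, h1, ← count_true_take_lowerChristoffel hk2,
    ← count_true_take_upperChristoffel hk2] at hcount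
  exact hcount.imp
    (fun h ↦ ⟨count_false_eq_of_count_true_eq
      (by rw [List.length_take, List.length_take, hlen, length_lowerChristoffel]) h, h⟩)
    (fun h ↦ ⟨count_false_eq_of_count_true_eq
      (by rw [List.length_take, List.length_take, hlen, length_upperChristoffel]) h, h⟩)
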